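/- Let φ : ℂ³ × ℂ³ → ℂ³ × ℂ³ be given by φ(z_1, z_2, z_3, w_1, w_2, w_3) = (i·w_2, i·w_1, z_3, i·z_2, i·z_1, w_3), where i = √−1. Then: (a) φ is equivariant for the two ℂ^×-actions: for every t ∈ ℂ^×, φ(t^{−2}z_1, t^{3}z_2, t^{6}z_3, t^{2}w_1, t^{−3}w_2, t^{−6}w_3) = t •_B φ(z,w), where t •_B (u,v) = (t^{−3}u_1, t^{2}u_2, t^{6}u_3, t^{3}v_1, t^{−2}v_2, t^{−6}v_3); (b) φ preserves the complex symplectic form ω((z,w),(z′,w′)) = Σ_{j=1}^{3}(z_j w′_j − w_j z′_j), i.e. ω(φ(x), φ(y)) = ω(x, y) for all x, y ∈ ℂ³ × ℂ³; (c) φ pulls back the moment polynomial: J_B(φ(z,w)) = J_A(z,w), where J_A(z,w) = −2 z_1 w_1 + 3 z_2 w_2 + 6 z_3 w_3 and J_B(u,v) = −3 u_1 v_1 + 2 u_2 v_2 + 6 u_3 v_3. Consequently the substitution f ↦ f ∘ φ restricts to a degree-preserving ℂ-algebra isomorphism from {ℂ^×-invariant polynomials in (u,v) for the B-action}/(J_B)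 onto {ℂ^×-invariant polynomials in (z,w) for the A-action}/(J_A). -/

import Mathlib

open Complex MvPolynomial

/-- Points of `ℂ³ × ℂ³` (`(z, w)`, complexified coordinates). -/
abbrev Pt6 := (Fin 3 → ℂ) × (Fin 3 → ℂ)

/-- The linear map `φ(z₁,z₂,z₃,w₁,w₂,w₃) = (i w₂, i w₁, z₃, i z₂, i z₁, w₃)`. -/
noncomputable def phiPt (p : Pt6) : Pt6 :=
  (![I * p.2 1, I * p.2 0, p.1 2], ![I * p.1 1, I * p.1 0, p.2 2])

/-- The complexified `ℂ^×`-action for the weight row `A = (-2, 3, 6)`. -/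
noncomputable def actApt (t : ℂ) (p : Pt6) : Pt6 :=
  (![t ^ (-2 : ℤ) * p.1 0, t ^ (3 : ℤ) * p.1 1, t ^ (6 : ℤ) * p.1 2],
   ![t ^ (2 : ℤ) * p.2 0, t ^ (-3 : ℤ) * p.2 1, t ^ (-6 : ℤ) * p.2 2])

/-- The complexified `ℂ^×`-action for the weight row `B = (-3, 2, 6)`. -/
noncomputable def actBpt (t : ℂ) (p : Pt6) : Pt6 :=
  (![t ^ (-3 : ℤ) * p.1 0, t ^ (2 : ℤ) * p.1 1, t ^ (6 : ℤ) * p.1 2],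
   ![t ^ (3 : ℤ) * p.2 0, t ^ (-2 : ℤ) * p.2 1, t ^ (-6 : ℤ) * p.2 2])

/-- The complex symplectic form `ω((z,w),(z',w')) = Σ_j (z_j w'_j - w_j z'_j)`. -/
noncomputable def omegaC (p q : Pt6) : ℂ :=
  ∑ j, (p.1 j * q.2 j - p.2 j * q.1 j)

/-- The moment polynomial function `J_A(z,w) = -2 z₁ w₁ + 3 z₂ w₂ + 6 z₃ w₃`. -/
noncomputable def JApt (p : Pt6) : ℂ :=
  -2 * p.1 0 * p.2 0 + 3 * p.1 1 * p.2 1 + 6 * p.1 2 * p.2 2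

/-- The moment polynomial function `J_B(u,v) = -3 u₁ v₁ + 2 u₂ v₂ + 6 u₃ v₃`. -/
noncomputable def JBpt (p : Pt6) : ℂ :=
  -3 * p.1 0 * p.2 0 + 2 * p.1 1 * p.2 1 + 6 * p.1 2 * p.2 2

/-- The polynomial ring in the variables `(z_1,z_2,z_3,w_1,w_2,w_3)` (the left summand
indexes the `z`'s, the right the `w`'s). -/
abbrev P6 := MvPolynomial (Fin 3 ⊕ Fin 3) ℂ

/-- The substitution action of `t ∈ ℂ^×` on polynomials for the weight row `A = (-2,3,6)`. -/
noncomputable def actPA (t : ℂ) : P6 →ₐ[ℂ] P6 :=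
  aeval fun x => Sum.elim
    (fun i => C (t ^ (![(-2 : ℤ), 3, 6] i)) * X (Sum.inl i))
    (fun i => C (t ^ (![(2 : ℤ), -3, -6] i)) * X (Sum.inr i)) x

/-- The substitution action of `t ∈ ℂ^×` on polynomials for the weight row `B = (-3,2,6)`. -/
noncomputable def actPB (t : ℂ) : P6 →ₐ[ℂ] P6 :=
  aeval fun x => Sum.elim
    (fun i => C (t ^ (![(-3 : ℤ), 2, 6] i)) * X (Sum.inl i))
    (fun i => C (t ^ (![(3 : ℤ), -2, -6] i)) * X (Sum.inr i)) x

/-- The invariant polynomials for the `A`-action. -/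
noncomputable def invA : Subalgebra ℂ P6 where
  carrier := {f | ∀ t : ℂ, t ≠ 0 → actPA t f = f}
  mul_mem' hf hg t ht := by rw [map_mul, hf t ht, hg t ht]
  add_mem' hf hg t ht := by rw [map_add, hf t ht, hg t ht]
  one_mem' t ht := map_one _
  zero_mem' t ht := map_zero _
  algebraMap_mem' r t ht := (actPA t).commutes r

/-- The invariant polynomials for the `B`-action. -/
noncomputable def invB : Subalgebra ℂ P6 where
  carrier := {f | ∀ t : ℂ, t ≠ 0 → actPB t f = f}
  mul_mem' hf hg t ht := by rw [map_mul, hf t ht, hg t ht]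
  add_mem' hf hg t ht := by rw [map_add, hf t ht, hg t ht]
  one_mem' t ht := map_one _
  zero_mem' t ht := map_zero _
  algebraMap_mem' r t ht := (actPB t).commutes r

/-- The moment polynomial `J_A = -2 z₁ w₁ + 3 z₂ w₂ + 6 z₃ w₃`. -/
noncomputable def JApoly : P6 :=
  C (-2 : ℂ) * X (Sum.inl 0) * X (Sum.inr 0) + C (3 : ℂ) * X (Sum.inl 1) * X (Sum.inr 1)
    + C (6 : ℂ) * X (Sum.inl 2) * X (Sum.inr 2)

/-- The moment polynomial `J_B = -3 u₁ v₁ + 2 u₂ v₂ + 6 u₃ v₃`. -/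
noncomputable def JBpoly : P6 :=
  C (-3 : ℂ) * X (Sum.inl 0) * X (Sum.inr 0) + C (2 : ℂ) * X (Sum.inl 1) * X (Sum.inr 1)
    + C (6 : ℂ) * X (Sum.inl 2) * X (Sum.inr 2)

/-- The ideal generated by `J_A` in the `A`-invariants. -/
noncomputable def idealA : Ideal invA := Ideal.span {f : invA | (f : P6) = JApoly}

/-- The ideal generated by `J_B` in the `B`-invariants. -/
noncomputable def idealB : Ideal invB := Ideal.span {f : invB | (f : P6) = JBpoly}

/-- The pullback `f ↦ f ∘ φ`, as the substitution
`u₁ ↦ i w₂, u₂ ↦ i w₁, u₃ ↦ z₃, v₁ ↦ i z₂, v₂ ↦ i z₁, v₃ ↦ w₃`. -/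
noncomputable def phiStar : P6 →ₐ[ℂ] P6 :=
  aeval fun x => Sum.elim
    (fun i => ![C I * X (Sum.inr 1), C I * X (Sum.inr 0), X (Sum.inl 2)] i)
    (fun i => ![C I * X (Sum.inl 1), C I * X (Sum.inl 0), X (Sum.inr 2)] i) x

/-- The inverse substitution of `phiStar`. -/
noncomputable def psiStar : P6 →ₐ[ℂ] P6 :=
  aeval fun x => Sum.elim
    (fun i => ![C (-I) * X (Sum.inr 1), C (-I) * X (Sum.inr 0), X (Sum.inl 2)] i)
    (fun i => ![C (-I) * X (Sum.inl 1), C (-I) * X (Sum.inl 0), X (Sum.inr 2)] i) x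

theorem CII : (C I * C I : P6) = -1 := by
  rw [← C_mul, I_mul_I]; simp

theorem psi_phi (f : P6) : psiStar (phiStar f) = f := by
  have h : psiStar.comp phiStar = AlgHom.id ℂ P6 := by
    apply MvPolynomial.algHom_ext
    rintro (i | i) <;> fin_cases i <;>
      simp [psiStar, phiStar, algHom_C, algebraMap_eq, ← mul_assoc, CII]
  exact DFunLike.congr_fun h f

theorem phi_psi (f : P6) : phiStar (psiStar f) = f := by
  have h : phiStar.comp psiStar = AlgHom.id ℂ P6 := by
    apply MvPolynomial.algHom_ext
    rintro (i | i) <;> fin_cases i <;>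
      simp [psiStar, phiStar, algHom_C, algebraMap_eq, ← mul_assoc, CII]
  exact DFunLike.congr_fun h f

theorem phi_act (t : ℂ) (f : P6) : actPA t (phiStar f) = phiStar (actPB t f) := by
  have h : (actPA t).comp phiStar = phiStar.comp (actPB t) := by
    apply MvPolynomial.algHom_ext
    rintro (i | i) <;> fin_cases i <;>
      simp [actPA, actPB, phiStar, algHom_C, algebraMap_eq, -map_zpow₀, -map_inv₀] <;> ring
  exact DFunLike.congr_fun h f

theorem phi_mem {f : P6} (hf : f ∈ invB) : phiStar f ∈ invA := fun t ht => by
  rw [phi_act, hf t ht]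

theorem psi_mem {f : P6} (hf : f ∈ invA) : psiStar f ∈ invB := fun t ht => by
  rw [← psi_phi (actPB t (psiStar f)), ← phi_act, phi_psi, hf t ht]

theorem phi_J : phiStar JBpoly = JApoly := by
  have h := CII
  simp only [phiStar, JBpoly, JApoly, map_add, map_mul, algHom_C, algebraMap_eq, aeval_X,
    Sum.elim_inl, Sum.elim_inr, Matrix.cons_val]
  simp only [map_neg]
  have h2 : (C 2 : P6) = 2 := rfl
  have h3 : (C 3 : P6) = 3 := rfl
  have h6 : (C 6 : P6) = 6 := rfl
  rw [h2, h3, h6]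
  linear_combination (-3 * X (Sum.inr 1) * X (Sum.inl 1) + 2 * X (Sum.inr 0) * X (Sum.inl 0)) * h

theorem phi_homog {f : P6} {d : ℕ} (hf : f.IsHomogeneous d) : (phiStar f).IsHomogeneous d := by
  have := hf.aeval (n := 1) (fun x => Sum.elim
    (fun i => ![C I * X (Sum.inr 1), C I * X (Sum.inr 0), X (Sum.inl 2)] i)
    (fun i => ![C I * X (Sum.inl 1), C I * X (Sum.inl 0), X (Sum.inr 2)] i) x : _ → P6) (by
      rintro (i | i) <;> fin_cases i <;>
        first
        | exact isHomogeneous_X _ _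
        | exact isHomogeneous_C_mul_X _ _)
  simpa [phiStar] using this

theorem psi_homog {f : P6} {d : ℕ} (hf : f.IsHomogeneous d) : (psiStar f).IsHomogeneous d := by
  have := hf.aeval (n := 1) (fun x => Sum.elim
    (fun i => ![C (-I) * X (Sum.inr 1), C (-I) * X (Sum.inr 0), X (Sum.inl 2)] i)
    (fun i => ![C (-I) * X (Sum.inl 1), C (-I) * X (Sum.inl 0), X (Sum.inr 2)] i) x : _ → P6) (by
      rintro (i | i) <;> fin_cases i <;>
        first
        | exact isHomogeneous_X _ _
        | exact isHomogeneous_C_mul_X _ _)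
  simpa only [psiStar, one_mul] using this

/-- The isomorphism of invariant algebras. -/
noncomputable def invEquiv : invB ≃ₐ[ℂ] invA :=
  AlgEquiv.ofAlgHom
    ((phiStar.comp invB.val).codRestrict invA (fun f => phi_mem f.2))
    ((psiStar.comp invA.val).codRestrict invB (fun f => psi_mem f.2))
    (AlgHom.ext fun f => Subtype.ext (phi_psi _))
    (AlgHom.ext fun f => Subtype.ext (psi_phi _))

theorem invEquiv_coe (f : invB) : (invEquiv f : P6) = phiStar f := rfl

theorem ideal_eq : idealA = idealB.map (invEquiv : invB →+* invA) := by
  rw [idealA, idealB, Ideal.map_span]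
  congr 1
  ext g
  constructor
  · intro hg
    refine ⟨invEquiv.symm g, ?_, invEquiv.apply_symm_apply g⟩
    change psiStar g = JBpoly
    rw [show (g : P6) = JApoly from hg, ← phi_J, psi_phi]
  · rintro ⟨f, hf, rfl⟩
    change phiStar f = JApoly
    rw [show (f : P6) = JBpoly from hf, phi_J]

/-- `φ` is equivariant for the two `ℂ^×`-actions, preserves the complex
symplectic form, pulls `J_B` back to `J_A`, and consequently `f ↦ f ∘ φ` induces a
degree-preserving ℂ-algebra isomorphism of the complex symplectic quotients of
`B = (-3,2,6)` and `A = (-2,3,6)`. -/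
theorem stmt15 :
    -- (a) equivariance
    (∀ t : ℂ, t ≠ 0 → ∀ p : Pt6, phiPt (actApt t p) = actBpt t (phiPt p))
    ∧
    -- (b) φ preserves the complex symplectic form
    (∀ p q : Pt6, omegaC (phiPt p) (phiPt q) = omegaC p q)
    ∧
    -- (c) φ pulls back the moment polynomial
    (∀ p : Pt6, JBpt (phiPt p) = JApt p)
    ∧
    -- f ↦ f ∘ φ maps B-invariants to A-invariants …
    (∀ f : P6, f ∈ invB → phiStar f ∈ invA)
    ∧
    -- … and induces a degree-preserving isomorphism of the graded quotient algebras
    (∃ Φ : (invB ⧸ idealB) ≃ₐ[ℂ] (invA ⧸ idealA),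
      (∀ (f : invB) (g : invA), phiStar (f : P6) = (g : P6) →
          Φ (Ideal.Quotient.mk idealB f) = Ideal.Quotient.mk idealA g)
      ∧
      (∀ d : ℕ,
        Φ '' (Ideal.Quotient.mk idealB '' {f : invB | ((f : P6)).IsHomogeneous d})
          = Ideal.Quotient.mk idealA '' {g : invA | ((g : P6)).IsHomogeneous d})) := by
  refine ⟨?_, ?_, ?_, fun f hf => phi_mem hf, ?_⟩
  · intro t ht p
    ext i <;> fin_cases i <;> simp [phiPt, actApt, actBpt] <;> ring
  · intro p q
    simp only [omegaC, phiPt, Fin.sum_univ_three, Matrix.cons_val]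
    linear_combination (p.2 1 * q.1 1 + p.2 0 * q.1 0 - p.1 1 * q.2 1 - p.1 0 * q.2 0) * I_mul_I
  · intro p
    simp only [JBpt, JApt, phiPt, Matrix.cons_val]
    linear_combination (-3 * p.2 1 * p.1 1 + 2 * p.2 0 * p.1 0) * I_mul_I
  · have key : ∀ f : invB, Ideal.quotientEquivAlg idealB idealA invEquiv ideal_eq
        (Ideal.Quotient.mk idealB f) = Ideal.Quotient.mk idealA (invEquiv f) := fun f => rfl
    refine ⟨Ideal.quotientEquivAlg idealB idealA invEquiv ideal_eq, ?_, ?_⟩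
    · intro f g h
      rw [key]
      congr 1
      exact Subtype.ext h
    · intro d
      ext y
      constructor
      · rintro ⟨_, ⟨f, hf, rfl⟩, rfl⟩
        exact ⟨invEquiv f, phi_homog hf, (key f).symm⟩
      · rintro ⟨g, hg, rfl⟩
        refine ⟨_, ⟨invEquiv.symm g, psi_homog hg, rfl⟩, ?_⟩
        rw [key, AlgEquiv.apply_symm_apply]
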